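/- arXiv:2411.10348 — 4 statements merged into one kernel-verified Lean document; each statement's English description precedes it below -/
import Mathlib

section
/- Let Ω, Ω' ⊆ ℝⁿ be open sets with Ω connected. Let f: Ω → ℝⁿ and h: Ω × ℝⁿ → ℝⁿ be smooth (C^∞) maps, and set F(x,t) = (f(x), h(x,t)). Assume: (i) f(Ω) ⊆ Ω'; (ii) for all (x,t) ∈ Ω × ℝⁿ and all m ∈ ℤⁿ, h(x, t+m) − h(x,t) ∈ ℤⁿ, so that F descends to a map F̄: Ω × (ℝⁿ/ℤⁿ) → Ω' × (ℝⁿ/ℤⁿ); (iii) F̄ is a bijection onto Ω' × (ℝⁿ/ℤⁿ); (iv) for every (x,t), the total derivative DF(x,t): ℝⁿ × ℝⁿ → ℝⁿ × ℝⁿ preserves ω₀, i.e., ω₀(DF(x,t)w₁, DF(x,t)w₂) = ω₀(w₁, w₂) for all w₁, w₂ ∈ ℝⁿ × ℝⁿ. Then there exist a matrix A ∈ GL_n(ℤ), a vector b ∈ ℝⁿ, and a smooth map g: Ω → ℝⁿ such that f(x) = A x + b and h(x,t) = A^{-T} t + g(x) for all (x,t) ∈ Ω × ℝⁿ. -/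
open Set

/-- The integer lattice `ℤⁿ` inside `ℝⁿ`. -/
def ZLat (n : ℕ) : Set (Fin n → ℝ) := {x | ∀ i, ∃ m : ℤ, x i = (m : ℝ)}

/-- A real matrix all of whose entries are integers. -/
def IsIntMat {n : ℕ} (A : Matrix (Fin n) (Fin n) ℝ) : Prop :=
  ∀ i j, ∃ m : ℤ, A i j = (m : ℝ)

/-- The standard inner product on `ℝⁿ`. -/
def dotR {n : ℕ} (u v : Fin n → ℝ) : ℝ := ∑ i, u i * v i

/-- The standard symplectic bilinear form on `ℝⁿ × ℝⁿ`:
`ω₀((u₁,v₁),(u₂,v₂)) = ⟨u₁,v₂⟩ − ⟨u₂,v₁⟩`. -/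
def omega0 {n : ℕ} (w₁ w₂ : (Fin n → ℝ) × (Fin n → ℝ)) : ℝ :=
  dotR w₁.1 w₂.2 - dotR w₂.1 w₁.2

/-- **Isomorphisms of Arnol'd–Liouville models.** Let `Ω` be open and
connected and `Ω'` open in `ℝⁿ`, and let `F(x,t) = (f x, h (x,t))` be smooth,
mapping `Ω × ℝⁿ` to `Ω' × ℝⁿ`, descending to a bijection
`Ω × ℝⁿ/ℤⁿ → Ω' × ℝⁿ/ℤⁿ` and whose derivative preserves the standard
symplectic form everywhere. Then `f x = A x + b` and `h (x,t) = A⁻ᵀ t + g x`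
for some `A ∈ GL_n(ℤ)`, `b ∈ ℝⁿ` and a smooth map `g : Ω → ℝⁿ`. -/
theorem arnold_liouville_isomorphism
    {n : ℕ} {Ω Ω' : Set (Fin n → ℝ)}
    (hΩ : IsOpen Ω) (hΩconn : IsConnected Ω) (hΩ' : IsOpen Ω')
    (f : (Fin n → ℝ) → (Fin n → ℝ))
    (h : (Fin n → ℝ) × (Fin n → ℝ) → (Fin n → ℝ))
    (F : (Fin n → ℝ) × (Fin n → ℝ) → (Fin n → ℝ) × (Fin n → ℝ))
    (hF : ∀ p, F p = (f p.1, h p))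
    (hfsmooth : ContDiffOn ℝ (⊤ : ℕ∞) f Ω)
    (hhsmooth : ContDiffOn ℝ (⊤ : ℕ∞) h (Ω ×ˢ (Set.univ : Set (Fin n → ℝ))))
    -- (i) `f(Ω) ⊆ Ω'`
    (hmaps : Set.MapsTo f Ω Ω')
    -- (ii) `h(x, t+m) − h(x,t) ∈ ℤⁿ` for all `m ∈ ℤⁿ`, so `F` descends to a map
    -- `F̄ : Ω × (ℝⁿ/ℤⁿ) → Ω' × (ℝⁿ/ℤⁿ)`
    (hper : ∀ x ∈ Ω, ∀ t : Fin n → ℝ, ∀ m ∈ ZLat n, h (x, t + m) - h (x, t) ∈ ZLat n)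
    -- (iii) `F̄` is a bijection onto `Ω' × (ℝⁿ/ℤⁿ)`: surjectivity ...
    (hsurj : ∀ x' ∈ Ω', ∀ t' : Fin n → ℝ,
      ∃ x ∈ Ω, ∃ t : Fin n → ℝ, f x = x' ∧ h (x, t) - t' ∈ ZLat n)
    -- ... and injectivity modulo `ℤⁿ`
    (hinj : ∀ x₁ ∈ Ω, ∀ x₂ ∈ Ω, ∀ t₁ t₂ : Fin n → ℝ,
      f x₁ = f x₂ → h (x₁, t₁) - h (x₂, t₂) ∈ ZLat n →
      x₁ = x₂ ∧ t₁ - t₂ ∈ ZLat n)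
    -- (iv) the total derivative of `F` preserves the standard symplectic form
    (hsymp : ∀ p ∈ Ω ×ˢ (Set.univ : Set (Fin n → ℝ)),
      ∀ w₁ w₂ : (Fin n → ℝ) × (Fin n → ℝ),
        omega0 (fderiv ℝ F p w₁) (fderiv ℝ F p w₂) = omega0 w₁ w₂) :
    ∃ A : Matrix (Fin n) (Fin n) ℝ, ∃ b : Fin n → ℝ,
      ∃ g : (Fin n → ℝ) → (Fin n → ℝ),
        IsIntMat A ∧ IsIntMat A⁻¹ ∧ IsUnit A.det ∧ ContDiffOn ℝ (⊤ : ℕ∞) g Ω ∧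
        ∀ x ∈ Ω, f x = A.mulVec x + b ∧
          ∀ t : Fin n → ℝ, h (x, t) = (A⁻¹).transpose.mulVec t + g x := by
  classical
  have hopen : IsOpen (Ω ×ˢ (Set.univ : Set (Fin n → ℝ))) := hΩ.prod isOpen_univ
  have hfd : ∀ x ∈ Ω, DifferentiableAt ℝ f x := fun x hx =>
    (hfsmooth.contDiffAt (hΩ.mem_nhds hx)).differentiableAt (by simp)
  have hhd : ∀ x ∈ Ω, ∀ t, DifferentiableAt ℝ h (x, t) := fun x hx t =>
    (hhsmooth.contDiffAt (hopen.mem_nhds ⟨hx, mem_univ _⟩)).differentiableAt (by simp)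
  have hFeq : F = fun p => (f p.1, h p) := funext hF
  have key : ∀ x ∈ Ω, ∀ t u v, dotR (fderiv ℝ f x u) (fderiv ℝ h (x, t) (0, v)) = dotR u v := by
    intro x hx t u v
    have h1 : HasFDerivAt (fun p : (Fin n → ℝ) × (Fin n → ℝ) => f p.1)
        ((fderiv ℝ f x).comp (ContinuousLinearMap.fst ℝ _ _)) (x, t) :=
      HasFDerivAt.comp (x, t) (g := f) (hfd x hx).hasFDerivAt hasFDerivAt_fst
    have h2 := h1.prodMk (hhd x hx t).hasFDerivAt
    have h3 := hsymp (x, t) ⟨hx, mem_univ _⟩ (u, 0) (0, v)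
    rw [hFeq, h2.fderiv] at h3
    simpa [omega0, dotR] using h3
  let A : (Fin n → ℝ) → Matrix (Fin n) (Fin n) ℝ := fun x =>
    LinearMap.toMatrix' (fderiv ℝ f x : (Fin n → ℝ) →ₗ[ℝ] (Fin n → ℝ))
  have hA : ∀ x u, fderiv ℝ f x u = (A x).mulVec u := fun x u => by
    simp [A]
  let H : (Fin n → ℝ) → (Fin n → ℝ) → Matrix (Fin n) (Fin n) ℝ := fun x t =>
    LinearMap.toMatrix' (((fderiv ℝ h (x, t)).comp
      (ContinuousLinearMap.inr ℝ _ _) : (Fin n → ℝ) →L[ℝ] (Fin n → ℝ)) :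
      (Fin n → ℝ) →ₗ[ℝ] (Fin n → ℝ))
  have hH : ∀ x t v, fderiv ℝ h (x, t) (0, v) = (H x t).mulVec v := fun x t v => by
    simp [H]
  have hAH : ∀ x ∈ Ω, ∀ t, (A x).transpose * H x t = 1 := by
    intro x hx t
    ext i j
    have := key x hx t (Pi.single i 1) (Pi.single j 1)
    rw [hA, hH] at this
    simpa [dotR, Matrix.mul_apply, Pi.single_apply, Matrix.one_apply, eq_comm] using this
  have hHinv : ∀ x ∈ Ω, ∀ t, H x t = ((A x)⁻¹).transpose := by
    intro x hx t
    rw [Matrix.transpose_nonsing_inv]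
    exact (Matrix.inv_eq_right_inv (hAH x hx t)).symm
  have hunit : ∀ x ∈ Ω, IsUnit (A x).det := by
    intro x hx
    have := congrArg Matrix.det (hAH x hx 0)
    rw [Matrix.det_mul, Matrix.det_transpose, Matrix.det_one] at this
    exact IsUnit.of_mul_eq_one _ this
  have haff : ∀ x ∈ Ω, ∀ t, h (x, t) = ((A x)⁻¹).transpose.mulVec t + h (x, 0) := by
    intro x hx t
    let L : (Fin n → ℝ) →L[ℝ] (Fin n → ℝ) :=
      LinearMap.toContinuousLinearMap (Matrix.toLin' ((A x)⁻¹).transpose)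
    have hL : ∀ v, L v = ((A x)⁻¹).transpose.mulVec v := fun v => by simp [L]
    have hd : ∀ s, HasFDerivAt (fun s => h (x, s) - L s) (0 : (Fin n → ℝ) →L[ℝ] (Fin n → ℝ)) s := by
      intro s
      have h1 : HasFDerivAt (fun s => h (x, s)) ((fderiv ℝ h (x, s)).comp
          (ContinuousLinearMap.inr ℝ _ _)) s :=
        HasFDerivAt.comp s (g := h) (hhd x hx s).hasFDerivAt (hasFDerivAt_prodMk_right x s)
      have h2 := h1.sub L.hasFDerivAt
      refine h2.congr_fderiv ?_
      ext1 v
      simp [hL, hH, hHinv x hx s]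
    have := is_const_of_fderiv_eq_zero (𝕜 := ℝ) (fun s => (hd s).differentiableAt)
      (fun s => (hd s).fderiv) t 0
    simp only [hL, Matrix.mulVec_zero, sub_zero] at this
    rw [← this]; abel
  have hsingle : ∀ j : Fin n, (Pi.single j (1:ℝ) : Fin n → ℝ) ∈ ZLat n := by
    intro j i
    by_cases hij : i = j
    · subst hij; exact ⟨1, by simp⟩
    · exact ⟨0, by simp [hij]⟩
  have hent : ∀ x ∈ Ω, ∀ i j, (A x)⁻¹ j i = h (x, Pi.single j 1) i - h (x, 0) i := by
    intro x hx i j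
    rw [haff x hx (Pi.single j 1)]
    simp
  have hint : ∀ x ∈ Ω, IsIntMat (A x)⁻¹ := by
    intro x hx j i
    rw [hent x hx i j]
    have := hper x hx 0 _ (hsingle j) i
    simpa using this
  obtain ⟨x₀, hx₀⟩ := hΩconn.nonempty
  have hconst : ∀ x ∈ Ω, (A x)⁻¹ = (A x₀)⁻¹ := by
    intro x hx
    ext j i
    have hslice : ∀ t : Fin n → ℝ, ContinuousOn (fun y => h (y, t) i) Ω := by
      intro t
      have h1 : ContinuousOn (fun y => h (y, t)) Ω :=
        hhsmooth.continuousOn.comp (by fun_prop) (fun y hy => ⟨hy, mem_univ _⟩)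
      exact (continuous_apply i).comp_continuousOn h1
    have hc : ContinuousOn (fun y => (A y)⁻¹ j i) Ω :=
      ((hslice (Pi.single j 1)).sub (hslice 0)).congr (fun y hy => hent y hy i j)
    have : DiscreteTopology (Set.range ((↑) : ℤ → ℝ)) :=
      Int.isClosedEmbedding_coe_real.isEmbedding.toHomeomorph.symm.isEmbedding.discreteTopology
    exact hΩconn.isPreconnected.constant_of_mapsTo (T := Set.range ((↑) : ℤ → ℝ)) ⟨this⟩ hc
      (fun y hy => by
        obtain ⟨m, hm⟩ := hint y hy j i
        exact ⟨m, hm.symm⟩) hx hx₀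
  have hAconst : ∀ x ∈ Ω, A x = A x₀ := by
    intro x hx
    have := congrArg (fun M => M⁻¹) (hconst x hx)
    simpa [Matrix.nonsing_inv_nonsing_inv _ (hunit x hx),
      Matrix.nonsing_inv_nonsing_inv _ (hunit x₀ hx₀)] using this
  have hfaff : ∃ b, ∀ x ∈ Ω, f x = (A x₀).mulVec x + b := by
    have hd : ∀ x ∈ Ω, HasFDerivAt (fun y => f y - fderiv ℝ f x₀ y)
        (0 : (Fin n → ℝ) →L[ℝ] (Fin n → ℝ)) x := by
      intro x hx
      have h2 := (hfd x hx).hasFDerivAt.sub (fderiv ℝ f x₀).hasFDerivAt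
      refine h2.congr_fderiv ?_
      ext1 v
      simp [hA, hAconst x hx]
    obtain ⟨b, hb⟩ := hΩ.exists_is_const_of_fderiv_eq_zero (𝕜 := ℝ) hΩconn.isPreconnected
      (fun x hx => (hd x hx).differentiableAt.differentiableWithinAt)
      (fun x hx => (hd x hx).fderiv)
    refine ⟨b, fun x hx => ?_⟩
    have := hb x hx
    simp only [hA] at this
    rw [← this]; abel
  obtain ⟨b, hb⟩ := hfaff
  refine ⟨A x₀, b, fun x => h (x, 0), ?_, hint x₀ hx₀, hunit x₀ hx₀, ?_, ?_⟩
  · intro i j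
    have h1 := hinj x₀ hx₀ x₀ hx₀ ((A x₀).transpose.mulVec (Pi.single i 1)) 0 rfl (by
      rw [haff x₀ hx₀ ((A x₀).transpose.mulVec (Pi.single i 1)), add_sub_cancel_right,
        Matrix.mulVec_mulVec, ← Matrix.transpose_mul, Matrix.mul_nonsing_inv _ (hunit x₀ hx₀),
        Matrix.transpose_one, Matrix.one_mulVec]
      exact hsingle i)
    have := h1.2 j
    simpa using this
  · exact hhsmooth.comp (by fun_prop) (fun y hy => ⟨hy, mem_univ _⟩)
  · intro x hx
    refine ⟨hb x hx, fun t => ?_⟩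
    rw [haff x hx t, hAconst x hx]
end

section
/- Let Ω ⊆ ℝⁿ be open and nonempty, let A ∈ GL_n(ℤ), b ∈ ℝⁿ, and let g: Ω → ℝⁿ be a smooth map. Define F: Ω × ℝⁿ → ℝⁿ × ℝⁿ by F(x,t) = (A x + b, A^{-T} t + g(x)). Fix x ∈ Ω and suppose that for every k ∈ {1, …, n} the line integral of the 1-form Σ_j x_j dt_j along the curve s ↦ F(x, s e_k), s ∈ [0,1], differs from x_k by an integer; that is, writing F(x, s e_k) = (γ₁(s), γ₂(s)) with γ₁, γ₂: [0,1] → ℝⁿ, suppose ∫₀¹ ⟨γ₁(s), γ₂′(s)⟩ ds − x_k ∈ ℤ for each k. Then b ∈ ℤⁿ. -/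
open Set

/-- The `k`-th standard basis vector of `ℝⁿ`. -/
def eVec {n : ℕ} (k : Fin n) : Fin n → ℝ := fun i => if i = k then 1 else 0

/-- Consider the map `F(x,t) = (A x + b, A⁻ᵀ t + g x)` with `A ∈ GL_n(ℤ)`,
`b ∈ ℝⁿ`, and `g : Ω → ℝⁿ` smooth, on an open nonempty `Ω ⊆ ℝⁿ`.  Fix `x ∈ Ω`.
If, for every `k`, the line integral of the 1-form `Σ_j x_j dt_j` along the
curve `s ↦ F(x, s e_k)`, `s ∈ [0,1]`, differs from `x_k` by an integer, then
`b ∈ ℤⁿ`. -/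
theorem holonomy_integrality_implies_b_integral
    {n : ℕ} {Ω : Set (Fin n → ℝ)} (hΩ : IsOpen Ω) (hne : Ω.Nonempty)
    (A : Matrix (Fin n) (Fin n) ℝ)
    (hAint : IsIntMat A) (hAinvint : IsIntMat A⁻¹) (hAunit : IsUnit A.det)
    (b : Fin n → ℝ) (g : (Fin n → ℝ) → (Fin n → ℝ))
    (hg : ContDiffOn ℝ (⊤ : ℕ∞) g Ω)
    (x : Fin n → ℝ) (hx : x ∈ Ω)
    -- Writing `F (x, s • e_k) = (γ₁ s, γ₂ s)`, i.e.
    -- `γ₁ s = A x + b` and `γ₂ s = A⁻ᵀ (s • e_k) + g x`, assume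
    -- `∫₀¹ ⟨γ₁ s, γ₂′ s⟩ ds − x_k ∈ ℤ` for each `k`:
    (hint : ∀ k : Fin n, ∃ m : ℤ,
      (∫ s in (0:ℝ)..1,
          dotR (A.mulVec x + b)
            (deriv (fun s : ℝ =>
              (A⁻¹).transpose.mulVec (s • eVec k) + g x) s)) - x k = (m : ℝ)) :
    b ∈ ZLat n := by
  have key : ∀ k : Fin n, ∃ m : ℤ, (A⁻¹).mulVec b k = (m : ℝ) := by
    intro k
    obtain ⟨m, hm⟩ := hint k
    refine ⟨m, ?_⟩
    have hd : ∀ s : ℝ, deriv (fun s : ℝ =>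
        (A⁻¹).transpose.mulVec (s • eVec k) + g x) s
        = (A⁻¹).transpose.mulVec (eVec k) := by
      intro s
      have h1 : HasDerivAt (fun s : ℝ => s • (A⁻¹).transpose.mulVec (eVec k) + g x)
          ((1:ℝ) • (A⁻¹).transpose.mulVec (eVec k)) s :=
        ((hasDerivAt_id s).smul_const _).add_const _
      simp only [Matrix.mulVec_smul]
      rw [h1.deriv, one_smul]
    have he : (A⁻¹).transpose.mulVec (eVec k) = fun i => A⁻¹ k i := by
      ext i
      simp [Matrix.mulVec, dotProduct, eVec]
    have hdot : dotR (A.mulVec x + b) (fun i => A⁻¹ k i)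
        = (A⁻¹).mulVec (A.mulVec x + b) k := by
      simp only [dotR, Matrix.mulVec, dotProduct]
      exact Finset.sum_congr rfl fun i _ => mul_comm _ _
    simp only [hd, he, hdot] at hm
    rw [Matrix.mulVec_add, Matrix.mulVec_mulVec, Matrix.nonsing_inv_mul _ hAunit,
      Matrix.one_mulVec] at hm
    simpa using hm
  have hb : b = A.mulVec ((A⁻¹).mulVec b) := by
    rw [Matrix.mulVec_mulVec, Matrix.mul_nonsing_inv _ hAunit, Matrix.one_mulVec]
  choose c hc using key
  choose a ha using hAint
  intro i
  refine ⟨∑ j, a i j * c j, ?_⟩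
  rw [hb]
  push_cast
  show ∑ j, A i j * (A⁻¹).mulVec b j = _
  exact Finset.sum_congr rfl fun j _ => by rw [ha, hc]
end

section
/- Let Ω ⊆ ℝⁿ be open and convex, and let β: Ω × ℝⁿ → L(ℝⁿ × ℝⁿ, ℝ) be a smooth 1-form (a smooth map into the space of linear functionals on ℝⁿ × ℝⁿ) that is ℤⁿ-periodic in the second variable, i.e., β(x, t+m) = β(x, t) for all (x,t) and all m ∈ ℤⁿ, and closed, i.e., at every point p ∈ Ω × ℝⁿ the derivative Dβ(p), viewed as a bilinear map (ℝⁿ×ℝⁿ) × (ℝⁿ×ℝⁿ) → ℝ via (w₁, w₂) ↦ (Dβ(p)w₁)(w₂), is symmetric. Then there exist a vector c ∈ ℝⁿ and a smooth function φ: Ω × ℝⁿ → ℝ with φ(x, t+m) = φ(x,t) for all m ∈ ℤⁿ, such that β(x,t)(u,v) = ⟨c, v⟩ + Dφ(x,t)(u,v) for all (x,t) ∈ Ω × ℝⁿ and all (u,v) ∈ ℝⁿ × ℝⁿ. Moreover, c_k = ∫₀¹ β(x, t + s e_k)(0, e_k) ds for every (x,t) ∈ Ω × ℝⁿ and every k ∈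 {1, …, n}. -/
open Set

/-- A closed smooth 1-form `β` on `Ω × ℝⁿ` (with `Ω ⊆ ℝⁿ` open and convex)
that is `ℤⁿ`-periodic in the second variable can be written as
`β = Σ_j c_j dt_j + dφ` for some constant vector `c ∈ ℝⁿ` and a smooth
`ℤⁿ`-periodic function `φ`; moreover `c_k` is recovered as the integral of
`β` along one period in the `t_k` direction. -/
theorem closed_periodic_one_form_decomposition
    {n : ℕ} {Ω : Set (Fin n → ℝ)} (hΩ : IsOpen Ω) (hconv : Convex ℝ Ω)
    (β : (Fin n → ℝ) × (Fin n → ℝ) → ((Fin n → ℝ) × (Fin n → ℝ)) →L[ℝ] ℝ)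
    (hsmooth : ContDiffOn ℝ (⊤ : ℕ∞) β (Ω ×ˢ (Set.univ : Set (Fin n → ℝ))))
    -- `ℤⁿ`-periodicity in the second variable
    (hper : ∀ x ∈ Ω, ∀ t : Fin n → ℝ, ∀ m ∈ ZLat n, β (x, t + m) = β (x, t))
    -- closedness: the derivative of `β` is symmetric at every point
    (hclosed : ∀ p ∈ Ω ×ˢ (Set.univ : Set (Fin n → ℝ)),
      ∀ w₁ w₂ : (Fin n → ℝ) × (Fin n → ℝ),
        (fderiv ℝ β p w₁) w₂ = (fderiv ℝ β p w₂) w₁) :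
    ∃ c : Fin n → ℝ, ∃ φ : (Fin n → ℝ) × (Fin n → ℝ) → ℝ,
      ContDiffOn ℝ (⊤ : ℕ∞) φ (Ω ×ˢ (Set.univ : Set (Fin n → ℝ))) ∧
      (∀ x ∈ Ω, ∀ t : Fin n → ℝ, ∀ m ∈ ZLat n, φ (x, t + m) = φ (x, t)) ∧
      (∀ p ∈ Ω ×ˢ (Set.univ : Set (Fin n → ℝ)), ∀ u v : Fin n → ℝ,
        β p (u, v) = dotR c v + fderiv ℝ φ p (u, v)) ∧
      (∀ x ∈ Ω, ∀ t : Fin n → ℝ, ∀ k : Fin n,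
        c k = ∫ s in (0:ℝ)..1, β (x, t + s • eVec k) (0, eVec k)) := by
  classical
  set U : Set ((Fin n → ℝ) × (Fin n → ℝ)) := Ω ×ˢ (Set.univ : Set (Fin n → ℝ)) with hU
  have hUo : IsOpen U := hΩ.prod isOpen_univ
  have hUc : Convex ℝ U := hconv.prod convex_univ
  rcases Ω.eq_empty_or_nonempty with hE | ⟨x0, hx0⟩
  · subst hE
    refine ⟨0, 0, ?_, ?_, ?_, ?_⟩ <;> simp [hU]
  obtain ⟨f, hf⟩ := hUc.exists_forall_hasFDerivAt_of_fderiv_symmetric hUo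
    (hsmooth.differentiableOn (by simp)) hclosed
  have hmem : ∀ x ∈ Ω, ∀ t : Fin n → ℝ, (x, t) ∈ U := fun x hx t => ⟨hx, mem_univ _⟩
  -- the period
  have hconst : ∀ m ∈ ZLat n, ∀ x ∈ Ω, ∀ t : Fin n → ℝ,
      f (x, t + m) - f (x, t) = f (x0, m) - f (x0, 0) := by
    intro m hm x hx t
    have hd : ∀ p ∈ U, HasFDerivAt (fun p : (Fin n → ℝ) × (Fin n → ℝ) =>
        f (p + (0, m)) - f p) (0 : ((Fin n → ℝ) × (Fin n → ℝ)) →L[ℝ] ℝ) p := by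
      rintro ⟨y, s⟩ hp
      have h1 : HasFDerivAt f (β (y, s)) ((y, s) + (0, m)) := by
        have := hf (y, s + m) (hmem y hp.1 _)
        rw [hper y hp.1 s m hm] at this
        simpa using this
      have h3 := h1.comp (y, s) ((hasFDerivAt_id (𝕜 := ℝ) (y, s)).add_const ((0, m) : (Fin n → ℝ) × (Fin n → ℝ)))
      rw [ContinuousLinearMap.comp_id] at h3
      have h2 := h3.sub (hf _ hp)
      rw [sub_self] at h2
      exact h2
    have := hUc.is_const_of_fderivWithin_eq_zero (𝕜 := ℝ)
      (fun p hp => (hd p hp).differentiableAt.differentiableWithinAt)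
      (fun p hp => by
        rw [fderivWithin_of_isOpen hUo hp]; exact (hd p hp).fderiv)
      (hmem x hx t) (hmem x0 hx0 0)
    simpa using this
  have hcast : ∀ m : Fin n → ℤ, (fun i => (m i : ℝ)) ∈ ZLat n := fun m i => ⟨m i, rfl⟩
  have hek : ∀ k : Fin n, eVec k ∈ ZLat n := by
    intro k i
    by_cases h : i = k
    · exact ⟨1, by simp [eVec, h]⟩
    · exact ⟨0, by simp [eVec, h]⟩
  let P : (Fin n → ℤ) →+ ℝ := AddMonoidHom.mk'
    (fun m => f (x0, fun i => (m i : ℝ)) - f (x0, 0)) (by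
      intro a b
      have h := hconst _ (hcast b) x0 hx0 (fun i => (a i : ℝ))
      have e : (fun i => ((a + b) i : ℝ)) = (fun i => (a i : ℝ)) + fun i => (b i : ℝ) := by
        ext i; simp
      rw [e]
      linarith)
  let c : Fin n → ℝ := fun k => f (x0, eVec k) - f (x0, 0)
  have hP : ∀ m ∈ ZLat n, f (x0, m) - f (x0, 0) = dotR c m := by
    intro m hm
    choose z hz using hm
    have e : m = fun i => (z i : ℝ) := funext hz
    have h := LinearMap.pi_apply_eq_sum_univ P.toIntLinearMap z
    have h' : f (x0, m) - f (x0, 0) = P z := by rw [e]; rfl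
    rw [h']
    refine h.trans ?_
    unfold dotR
    refine Finset.sum_congr rfl fun i _ => ?_
    have e2 : (fun j => (((if i = j then 1 else 0 : ℤ)) : ℝ)) = eVec i := by
      ext j
      by_cases hij : i = j
      · simp [eVec, hij]
      · simp [eVec, hij, Ne.symm hij]
    have e3 : P.toIntLinearMap (fun j => if i = j then 1 else 0) = c i := by
      change f (x0, fun j => (((if i = j then 1 else 0 : ℤ)) : ℝ)) - f (x0, 0) = _
      rw [e2]
    rw [e3, hz i, zsmul_eq_mul, mul_comm]
  let L : ((Fin n → ℝ) × (Fin n → ℝ)) →L[ℝ] ℝ :=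
    ∑ i, c i • ((ContinuousLinearMap.proj i).comp (ContinuousLinearMap.snd ℝ _ _))
  have hL : ∀ p, L p = dotR c p.2 := by
    intro p
    simp [L, dotR]
  have hφ : ∀ p ∈ U, HasFDerivAt (fun p => f p - L p) (β p - L) p :=
    fun p hp => (hf p hp).sub L.hasFDerivAt
  refine ⟨c, fun p => f p - L p, ?_, ?_, ?_, ?_⟩
  · refine (contDiffOn_infty_iff_fderiv_of_isOpen hUo).2
      ⟨fun p hp => (hφ p hp).differentiableAt.differentiableWithinAt, ?_⟩
    exact (hsmooth.sub contDiffOn_const).congr fun p hp => (hφ p hp).fderiv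
  · intro x hx t m hm
    have h1 := hconst m hm x hx t
    rw [hP m hm] at h1
    have h2 : dotR c (t + m) = dotR c t + dotR c m := by
      simp [dotR, mul_add, Finset.sum_add_distrib]
    simp only [hL]
    linarith
  · intro p hp u v
    rw [(hφ p hp).fderiv]
    simp [hL]
  · intro x hx t k
    have hg : ∀ s : ℝ, HasDerivAt (fun s : ℝ => (x, t + s • eVec k))
        ((0, eVec k) : (Fin n → ℝ) × (Fin n → ℝ)) s := by
      intro s
      have h := ((hasDerivAt_id s).smul_const (eVec k)).const_add t
      rw [one_smul] at h
      exact (hasDerivAt_const s x).prodMk h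
    have hgc : Continuous (fun s : ℝ => (x, t + s • eVec k)) := by fun_prop
    have hb : Continuous (fun s : ℝ => β (x, t + s • eVec k)) :=
      hsmooth.continuousOn.comp_continuous hgc (fun s => hmem x hx _)
    have hi := intervalIntegral.integral_eq_sub_of_hasDerivAt (a := 0) (b := 1)
      (f := fun s : ℝ => f (x, t + s • eVec k))
      (f' := fun s : ℝ => β (x, t + s • eVec k) (0, eVec k))
      (fun s _ => (hf _ (hmem x hx _)).comp_hasDerivAt s (hg s))
      ((hb.clm_apply continuous_const).intervalIntegrable _ _)
    rw [hi]
    have := hconst _ (hek k) x hx t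
    simp only [one_smul, zero_smul, add_zero]
    exact this.symm
end

section
/- Let E be a finite-dimensional real vector space, let ω be a nondegenerate alternating bilinear form on E, and let J: E → E be a linear map with J ∘ J = −id, ω(J u, J v) = ω(u, v) for all u, v ∈ E, and ω(u, J u) > 0 for all u ≠ 0 (a compatible complex structure). Let V ⊆ E be a Lagrangian subspace, i.e., V equals its ω-orthogonal complement {u ∈ E : ω(u, v) = 0 for all v ∈ V}. Then V and J(V) are complementary subspaces: E = V ⊕ J(V). -/
/-- Let `E` be a finite-dimensional real vector space with a nondegenerate
alternating bilinear form `ω` and a compatible complex structure `J`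
(`J² = −id`, `ω(Ju, Jv) = ω(u,v)`, and `ω(u, Ju) > 0` for `u ≠ 0`).
If `V` is a Lagrangian subspace (equal to its own `ω`-orthogonal complement),
then `V` and `J(V)` are complementary: `E = V ⊕ J(V)`. -/
theorem lagrangian_compl_J_image
    {E : Type*} [AddCommGroup E] [Module ℝ E] [FiniteDimensional ℝ E]
    (ω : E →ₗ[ℝ] E →ₗ[ℝ] ℝ)
    (halt : ∀ u : E, ω u u = 0)
    (hnd : ∀ u : E, (∀ v : E, ω u v = 0) → u = 0)
    (J : E →ₗ[ℝ] E)
    (hJ2 : ∀ u : E, J (J u) = -u)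
    (hJω : ∀ u v : E, ω (J u) (J v) = ω u v)
    (hpos : ∀ u : E, u ≠ 0 → 0 < ω u (J u))
    (V : Submodule ℝ E)
    (hLag : ∀ u : E, u ∈ V ↔ ∀ v ∈ V, ω u v = 0) :
    IsCompl V (V.map J) := by
  have hdis : ∀ x ∈ V, x ∈ V.map J → x = 0 := by
    rintro x hx ⟨w, hw, rfl⟩
    by_contra hne
    have hw0 : w ≠ 0 := by
      rintro rfl
      exact hne (map_zero J)
    have h1 := hpos (J w) hne
    have h2 := (hLag (J w)).1 hx w hw
    rw [hJ2, map_neg, h2] at h1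
    simp at h1
  refine ⟨Submodule.disjoint_def.2 hdis, ?_⟩
  let T : V →ₗ[ℝ] Module.Dual ℝ V := (ω.compl₂ J).compl₁₂ V.subtype V.subtype
  have hT : ∀ v w : V, T v w = ω v (J w) := fun v w => rfl
  have hinj : Function.Injective T := by
    rw [← LinearMap.ker_eq_bot, LinearMap.ker_eq_bot']
    intro v hv
    by_contra hne
    have h1 := hpos v (fun h => hne (Subtype.ext h))
    rw [← hT, hv] at h1
    simp at h1
  have hsurj : Function.Surjective T :=
    (LinearMap.injective_iff_surjective_of_finrank_eq_finrank
      (Subspace.dual_finrank_eq (K := ℝ) (V := V)).symm).1 hinj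
  rw [codisjoint_iff, Submodule.eq_top_iff']
  intro u
  obtain ⟨v, hv⟩ := hsurj (((ω u).comp J).comp V.subtype)
  have hmem : J (u - v) ∈ V := by
    rw [hLag]
    intro w hw
    have h1 : ω v (J w) = ω u (J w) := by
      have := LinearMap.congr_fun hv ⟨w, hw⟩
      exact this
    have h2 := hJω (u - v) (J w)
    rw [hJ2, map_neg, map_sub ω, LinearMap.sub_apply, h1] at h2
    linarith
  have h3 : u - v ∈ V.map J := ⟨-J (u - v), V.neg_mem hmem, by rw [map_neg, hJ2, neg_neg]⟩
  exact Submodule.mem_sup.2 ⟨v, v.2, u - v, h3, by abel⟩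
end
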